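/- arXiv:1806.11069 — 2 statements merged into one kernel-verified Lean document; each statement's English description precedes it below -/
import Mathlib

section
/- Let K_1, K_2, K_3 be convex bodies in ℝ² (compact convex sets with nonempty interior) that pairwise touch (for all i ≠ j, K_i ∩ K_j ≠ ∅ and interior(K_i) ∩ interior(K_j) = ∅), and suppose K_1 ∩ K_2 ∩ K_3 = ∅. Then the complement ℝ² \ (K_1 ∪ K_2 ∪ K_3) has exactly two connected components, exactly one of which is bounded. -/
/-!
Choose `p ∈ K₂ ∩ K₃`, `q ∈ K₁ ∩ K₂`, `s ∈ K₁ ∩ K₃`. These points are not collinear, since the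
middle one would belong to all three sets, and the edges of the triangle `T = pqs` lie in the union
`K` of the three sets. Hence `T \ K` and `Kᶜ \ T` are disjoint open sets with union `Kᶜ`, and it
suffices to show that `T \ K` is nonempty and connected, and that `Kᶜ \ T` is connected.

*The hole.* Look at the rays from `p` to the points of the edge `qs`. Such a ray starts in
`K₂ ∩ K₃`, ends in `K₁`, and by convexity it meets `T \ K` in one interval, which is empty exactly
when the ray meets `K₁ ∩ K₂` or `K₁ ∩ K₃` (`blocked_of_covered`, `covered_of_blocked₂`,
`covered_of_blocked₃`). The rays of the first kind form a closed interval containing the ray through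
`q`, those of the second kind a closed interval containing the ray through `s` (`blocked_down`,
`blocked_up`). No ray is of both kinds, because the meeting point nearer to `p` would be a common
point of the three sets. So the remaining rays form a nonempty interval (`exists_gap`), and `T \ K`,
fibred over it with intervals as fibres, is connected (`isPreconnected_hole`).

*The exterior.* From a point `x ∉ T ∪ K` some direction `v` meets all three sets: it points to one
of the vertices, and the ray crosses the opposite edge (`exists_common_direction`). As `x` lies in
none of the sets, convexity shows that the ray in direction `-v` misses all of them, so it joins `x`
within `Kᶜ` to the connected complement of a large ball.
-/

/-! ### The triangle and the rays from one of its vertices -/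

/-- The point at parameter `r` on the ray from `p` through the point of the line `qs` at
parameter `θ`. For `θ, r ∈ [0, 1]` these points fill the triangle `pqs`. -/
def rayPoint (p q s : Fin 2 → ℝ) (θ r : ℝ) : Fin 2 → ℝ :=
  p + r • ((1 - θ) • (q - p) + θ • (s - p))

/-- Three closed convex sets without common point, with a chosen point in each pairwise
intersection: `p ∈ K₂ ∩ K₃`, `q ∈ K₁ ∩ K₂` and `s ∈ K₁ ∩ K₃`. -/
structure TouchingTriple (K₁ K₂ K₃ : Set (Fin 2 → ℝ)) (p q s : Fin 2 → ℝ) : Prop where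
  c1 : IsClosed K₁
  c2 : IsClosed K₂
  c3 : IsClosed K₃
  v1 : Convex ℝ K₁
  v2 : Convex ℝ K₂
  v3 : Convex ℝ K₃
  p2 : p ∈ K₂
  p3 : p ∈ K₃
  q1 : q ∈ K₁
  q2 : q ∈ K₂
  s1 : s ∈ K₁
  s3 : s ∈ K₃
  no : ∀ x, x ∈ K₁ → x ∈ K₂ → x ∈ K₃ → False

theorem Convex.mem_of_mem_line {E : Type*} [AddCommGroup E] [Module ℝ E] {K : Set E}
    (hK : Convex ℝ K) {x v : E} {a b c : ℝ} (ha : x + a • v ∈ K) (hc : x + c • v ∈ K)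
    (hab : a ≤ b) (hbc : b ≤ c) : x + b • v ∈ K := by
  have h : Convex ℝ {t : ℝ | x + t • v ∈ K} := by
    intro t ht u hu m n hm hn hmn
    have := hK ht hu hm hn hmn
    have e : m • (x + t • v) + n • (x + u • v) = x + (m • t + n • u) • v := by
      obtain rfl : m = 1 - n := by linarith
      simp only [smul_eq_mul]
      module
    rwa [e] at this
  exact (convex_iff_ordConnected.1 h).out ha hc ⟨hab, hbc⟩

theorem rayPoint_swap (p q s : Fin 2 → ℝ) (θ r : ℝ) :
    rayPoint p s q (1 - θ) r = rayPoint p q s θ r := by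
  unfold rayPoint; module

theorem rayPoint_zero_right (p q s : Fin 2 → ℝ) (θ : ℝ) : rayPoint p q s θ 0 = p := by
  simp [rayPoint]

theorem rayPoint_one_right (p q s : Fin 2 → ℝ) (θ : ℝ) :
    rayPoint p q s θ 1 = (1 - θ) • q + θ • s := by
  unfold rayPoint; module

theorem continuous_rayPoint (p q s : Fin 2 → ℝ) :
    Continuous (fun z : ℝ × ℝ => rayPoint p q s z.1 z.2) := by
  unfold rayPoint; fun_prop

theorem rayPoint_mem_triangle (p q s : Fin 2 → ℝ) {θ r : ℝ} (hθ : θ ∈ Set.Icc (0 : ℝ) 1)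
    (hr : r ∈ Set.Icc (0 : ℝ) 1) : rayPoint p q s θ r ∈ convexHull ℝ {p, q, s} := by
  have hc := convex_convexHull ℝ ({p, q, s} : Set (Fin 2 → ℝ))
  have hp : p ∈ convexHull ℝ {p, q, s} := subset_convexHull ℝ _ (by simp)
  have hq : q ∈ convexHull ℝ {p, q, s} := subset_convexHull ℝ _ (by simp)
  have hs : s ∈ convexHull ℝ {p, q, s} := subset_convexHull ℝ _ (by simp)
  refine hc.mem_of_mem_line (a := 0) (c := 1) (by simpa using hp) ?_ hr.1 hr.2
  have := hc hq hs (sub_nonneg.2 hθ.2) hθ.1 (by ring)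
  rwa [← rayPoint_one_right p q s θ] at this

namespace TouchingTriple

variable {K₁ K₂ K₃ : Set (Fin 2 → ℝ)} {p q s : Fin 2 → ℝ}

theorem swap (h : TouchingTriple K₁ K₂ K₃ p q s) : TouchingTriple K₁ K₃ K₂ p s q :=
  ⟨h.c1, h.c3, h.c2, h.v1, h.v3, h.v2, h.p3, h.p2, h.s1, h.s3, h.q1, h.q2,
    fun x h1 h2 h3 => h.no x h1 h3 h2⟩

theorem rayPoint_one_mem (h : TouchingTriple K₁ K₂ K₃ p q s) {θ : ℝ}
    (hθ : θ ∈ Set.Icc (0 : ℝ) 1) : rayPoint p q s θ 1 ∈ K₁ := by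
  rw [rayPoint_one_right]
  exact h.v1 h.q1 h.s1 (sub_nonneg.2 hθ.2) hθ.1 (by ring)

/-- If the three points were collinear, the middle one would lie in all three sets. -/
theorem not_collinear (h : TouchingTriple K₁ K₂ K₃ p q s) :
    ¬ Collinear ℝ ({p, q, s} : Set (Fin 2 → ℝ)) := by
  intro hc
  rcases hc.wbtw_or_wbtw_or_wbtw with hw | hw | hw
  · exact h.no q h.q1 h.q2 (h.v3.segment_subset h.p3 h.s3 (by
      rw [← affineSegment_eq_segment]; exact hw))
  · exact h.no s h.s1 (h.v2.segment_subset h.q2 h.p2 (by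
      rw [← affineSegment_eq_segment]; exact hw)) h.s3
  · exact h.no p (h.v1.segment_subset h.s1 h.q1 (by
      rw [← affineSegment_eq_segment]; exact hw)) h.p2 h.p3

/-- The set of rays from `p` that meet `K₁ ∩ K₂` inside the triangle is downward closed: the
segment from `q` to a point of `K₁ ∩ K₂` crosses all the rays in between. -/
theorem blocked_down (h : TouchingTriple K₁ K₂ K₃ p q s) {θ θ' r : ℝ} (h0 : 0 ≤ θ')
    (hle : θ' ≤ θ) (hr : r ∈ Set.Icc (0 : ℝ) 1)
    (hm : rayPoint p q s θ r ∈ K₁ ∩ K₂) :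
    ∃ r' ∈ Set.Icc (0 : ℝ) 1, rayPoint p q s θ' r' ∈ K₁ ∩ K₂ := by
  rcases h0.eq_or_lt with rfl | h0
  · refine ⟨1, by simp, ?_⟩
    have : rayPoint p q s 0 1 = q := by simp [rayPoint]
    rw [this]
    exact ⟨h.q1, h.q2⟩
  have hd : 0 < r * (θ - θ') + θ' := by nlinarith [mul_nonneg hr.1 (sub_nonneg.2 hle)]
  obtain ⟨t, ht⟩ : ∃ t, t = θ' / (r * (θ - θ') + θ') := ⟨_, rfl⟩
  have ht0 : 0 ≤ t := by rw [ht]; positivity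
  have ht1 : t ≤ 1 := by
    rw [ht, div_le_one hd]; nlinarith [mul_nonneg hr.1 (sub_nonneg.2 hle)]
  have hte : t * (r * (θ - θ') + θ') = θ' := by rw [ht]; field_simp
  refine ⟨1 - t + t * r, ⟨by nlinarith [mul_nonneg ht0 hr.1],
    by nlinarith [mul_nonneg ht0 (sub_nonneg.2 hr.2)]⟩, ?_⟩
  have e : rayPoint p q s θ' (1 - t + t * r) = (1 - t) • q + t • rayPoint p q s θ r := by
    unfold rayPoint
    ext i
    simp only [Pi.add_apply, Pi.smul_apply, Pi.sub_apply, smul_eq_mul]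
    linear_combination (q i - s i) * hte
  rw [e]
  exact ⟨h.v1 h.q1 hm.1 (by linarith) ht0 (by ring), h.v2 h.q2 hm.2 (by linarith) ht0 (by ring)⟩

theorem blocked_up (h : TouchingTriple K₁ K₂ K₃ p q s) {θ θ' r : ℝ} (h1 : θ' ≤ 1)
    (hle : θ ≤ θ') (hr : r ∈ Set.Icc (0 : ℝ) 1)
    (hm : rayPoint p q s θ r ∈ K₁ ∩ K₃) :
    ∃ r' ∈ Set.Icc (0 : ℝ) 1, rayPoint p q s θ' r' ∈ K₁ ∩ K₃ := by
  rw [← rayPoint_swap] at hm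
  obtain ⟨r', hr', hm'⟩ := h.swap.blocked_down (sub_nonneg.2 h1) (by linarith) hr hm
  exact ⟨r', hr', by rwa [rayPoint_swap] at hm'⟩

/-- A ray meeting `K₁ ∩ K₂` is covered inside the triangle: it runs in `K₂` up to the meeting
point and in `K₁` from there on. -/
theorem covered_of_blocked₂ (h : TouchingTriple K₁ K₂ K₃ p q s) {θ r u : ℝ}
    (hθ : θ ∈ Set.Icc (0 : ℝ) 1) (hu : u ∈ Set.Icc (0 : ℝ) 1)
    (hm : rayPoint p q s θ r ∈ K₁ ∩ K₂) : rayPoint p q s θ u ∈ K₁ ∪ K₂ ∪ K₃ := by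
  rcases le_total u r with hur | hur
  · exact .inl (.inr (h.v2.mem_of_mem_line (a := 0) (by simpa using h.p2) hm.2 hu.1 hur))
  · exact .inl (.inl (h.v1.mem_of_mem_line hm.1 (h.rayPoint_one_mem hθ) hur hu.2))

theorem covered_of_blocked₃ (h : TouchingTriple K₁ K₂ K₃ p q s) {θ r u : ℝ}
    (hθ : θ ∈ Set.Icc (0 : ℝ) 1) (hu : u ∈ Set.Icc (0 : ℝ) 1)
    (hm : rayPoint p q s θ r ∈ K₁ ∩ K₃) : rayPoint p q s θ u ∈ K₁ ∪ K₂ ∪ K₃ := by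
  rw [← rayPoint_swap] at hm ⊢
  have := h.swap.covered_of_blocked₂ ⟨sub_nonneg.2 hθ.2, by linarith [hθ.1]⟩ hu hm
  rwa [Set.union_right_comm] at this

/-- Conversely, a ray that is covered inside the triangle meets `K₁ ∩ (K₂ ∪ K₃)`, because it
leads from `K₂ ∪ K₃` to `K₁` and segments are connected. -/
theorem blocked_of_covered (h : TouchingTriple K₁ K₂ K₃ p q s) {θ : ℝ}
    (hθ : θ ∈ Set.Icc (0 : ℝ) 1)
    (hcov : ∀ r ∈ Set.Icc (0 : ℝ) 1, rayPoint p q s θ r ∈ K₁ ∪ K₂ ∪ K₃) :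
    (∃ r ∈ Set.Icc (0 : ℝ) 1, rayPoint p q s θ r ∈ K₁ ∩ K₂) ∨
      ∃ r ∈ Set.Icc (0 : ℝ) 1, rayPoint p q s θ r ∈ K₁ ∩ K₃ := by
  have hcont : Continuous (rayPoint p q s θ) := by unfold rayPoint; fun_prop
  obtain ⟨r, hr, hr1, hr2⟩ := isPreconnected_closed_iff.1 (isPreconnected_Icc (a := (0 : ℝ)) (b := 1))
    (rayPoint p q s θ ⁻¹' K₁) (rayPoint p q s θ ⁻¹' (K₂ ∪ K₃)) (h.c1.preimage hcont)
    ((h.c2.union h.c3).preimage hcont)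
    (fun r hr => by
      rcases hcov r hr with (h1 | h1) | h1
      · exact .inl h1
      · exact .inr (.inl h1)
      · exact .inr (.inr h1))
    ⟨1, by simp, h.rayPoint_one_mem hθ⟩
    ⟨0, by simp, .inl (by rw [rayPoint_zero_right]; exact h.p2)⟩
  rcases hr2 with hr2 | hr2
  · exact .inl ⟨r, hr, hr1, hr2⟩
  · exact .inr ⟨r, hr, hr1, hr2⟩

/-! ### The hole -/

/-- If the whole triangle were covered, the rays meeting `K₁ ∩ K₂` and those meeting `K₁ ∩ K₃`
would form two closed sets covering the connected space of all rays. A common ray is impossible: of its two meeting points,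
the one nearer to `p` would lie in all three sets. -/
theorem exists_gap (h : TouchingTriple K₁ K₂ K₃ p q s) :
    ∃ θ ∈ Set.Icc (0 : ℝ) 1, ∃ r ∈ Set.Icc (0 : ℝ) 1,
      rayPoint p q s θ r ∉ K₁ ∪ K₂ ∪ K₃ := by
  by_contra! hno
  have hclosed : ∀ K : Set (Fin 2 → ℝ), IsClosed K → IsClosed
      {θ : ℝ | ∃ r ∈ Set.Icc (0 : ℝ) 1, θ ∈ Set.Icc (0 : ℝ) 1 ∧ rayPoint p q s θ r ∈ K} := by
    intro K hK
    have hcp : IsCompact ((Set.Icc (0 : ℝ) 1 ×ˢ Set.Icc (0 : ℝ) 1) ∩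
        (fun z : ℝ × ℝ => rayPoint p q s z.1 z.2) ⁻¹' K) :=
      (isCompact_Icc.prod isCompact_Icc).inter_right (hK.preimage (continuous_rayPoint p q s))
    convert (hcp.image continuous_fst).isClosed using 1
    ext θ
    constructor
    · rintro ⟨r, hr, hθ, hm⟩
      exact ⟨(θ, r), ⟨⟨hθ, hr⟩, hm⟩, rfl⟩
    · rintro ⟨⟨a, r⟩, ⟨⟨hθ, hr⟩, hm⟩, rfl⟩
      exact ⟨r, hr, hθ, hm⟩
  obtain ⟨θ, hθ, ⟨r, hr, -, hm2⟩, u, hu, -, hm3⟩ :=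
    isPreconnected_closed_iff.1 (isPreconnected_Icc (a := (0 : ℝ)) (b := 1)) _ _
      (hclosed (K₁ ∩ K₂) (h.c1.inter h.c2)) (hclosed (K₁ ∩ K₃) (h.c1.inter h.c3))
      (fun θ hθ => by
        rcases h.blocked_of_covered hθ (hno θ hθ) with ⟨r, hr, hm⟩ | ⟨r, hr, hm⟩
        · exact .inl ⟨r, hr, hθ, hm⟩
        · exact .inr ⟨r, hr, hθ, hm⟩)
      ⟨0, by simp, 1, by simp, by simp, by simpa [rayPoint] using ⟨h.q1, h.q2⟩⟩
      ⟨1, by simp, 1, by simp, by simp, by simpa [rayPoint] using ⟨h.s1, h.s3⟩⟩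
  rcases le_total r u with hru | hru
  · exact h.no _ hm2.1 hm2.2
      (h.v3.mem_of_mem_line (a := 0) (by simpa using h.p3) hm3.2 hr.1 hru)
  · exact h.no _ hm3.1
      (h.v2.mem_of_mem_line (a := 0) (by simpa using h.p2) hm2.2 hu.1 hru) hm3.2

/-- Barycentric coordinates with respect to the triangle `pqs`. -/
theorem exists_coords (h : TouchingTriple K₁ K₂ K₃ p q s) :
    ∃ a b c : (Fin 2 → ℝ) → ℝ, Continuous a ∧ Continuous b ∧ Continuous c ∧
      (∀ x, a x + b x + c x = 1) ∧ (∀ x, x = a x • p + b x • q + c x • s) ∧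
      convexHull ℝ {p, q, s} = {x | 0 ≤ a x ∧ 0 ≤ b x ∧ 0 ≤ c x} := by
  have hind : AffineIndependent ℝ ![p, q, s] :=
    affineIndependent_iff_not_collinear_set.2 h.not_collinear
  let B : AffineBasis (Fin 3) ℝ (Fin 2 → ℝ) := ⟨![p, q, s], hind,
    hind.affineSpan_eq_top_iff_card_eq_finrank_add_one.2 (by simp)⟩
  have hB : ⇑B = ![p, q, s] := rfl
  refine ⟨B.coord 0, B.coord 1, B.coord 2, continuous_barycentric_coord B 0,
    continuous_barycentric_coord B 1, continuous_barycentric_coord B 2, ?_, ?_, ?_⟩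
  · intro x
    have := B.sum_coord_apply_eq_one x
    rwa [Fin.sum_univ_three] at this
  · intro x
    have := B.linear_combination_coord_eq_self x
    rw [Fin.sum_univ_three, hB] at this
    simpa using this.symm
  · have := B.convexHull_eq_nonneg_coord
    rw [hB] at this
    have hr : Set.range ![p, q, s] = {p, q, s} := by
      ext x
      simp only [Set.mem_range, Fin.exists_fin_succ, Set.mem_insert_iff, Set.mem_singleton_iff]
      simp [eq_comm (b := x)]
    rw [hr] at this
    rw [this]
    ext x
    simp [Fin.forall_fin_succ]

theorem exists_rayPoint_eq (h : TouchingTriple K₁ K₂ K₃ p q s) {x : Fin 2 → ℝ}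
    (hx : x ∈ convexHull ℝ {p, q, s}) :
    ∃ θ ∈ Set.Icc (0 : ℝ) 1, ∃ r ∈ Set.Icc (0 : ℝ) 1, rayPoint p q s θ r = x := by
  obtain ⟨a, b, c, -, -, -, h1, hx', hT⟩ := h.exists_coords
  rw [hT] at hx
  obtain ⟨ha, hb, hc⟩ := hx
  have h1 := h1 x
  have hx' := hx' x
  rcases (add_nonneg hb hc).eq_or_lt with h0 | h0
  · refine ⟨0, by simp, 0, by simp, ?_⟩
    have hb0 : b x = 0 := by linarith
    have hc0 : c x = 0 := by linarith
    have ha0 : a x = 1 := by linarith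
    rw [rayPoint_zero_right, hx', ha0, hb0, hc0]
    simp
  · refine ⟨c x / (b x + c x), ⟨by positivity, ?_⟩, b x + c x, ⟨h0.le, by linarith⟩, ?_⟩
    · rw [div_le_one h0]; linarith
    · have e1 : (b x + c x) * (c x / (b x + c x)) = c x := by field_simp
      conv_rhs => rw [hx']
      unfold rayPoint
      ext i
      simp only [Pi.add_apply, Pi.smul_apply, Pi.sub_apply, smul_eq_mul]
      linear_combination (s i - q i) * e1 - p i * h1

/-- The edges of the triangle are covered by the three sets, so the part of the triangle outside
them consists of interior points. -/
theorem isOpen_hole (h : TouchingTriple K₁ K₂ K₃ p q s) :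
    IsOpen (convexHull ℝ {p, q, s} \ (K₁ ∪ K₂ ∪ K₃)) := by
  obtain ⟨a, b, c, ca, cb, cc, h1, hx', hT⟩ := h.exists_coords
  have e : convexHull ℝ {p, q, s} \ (K₁ ∪ K₂ ∪ K₃) =
      ({x | 0 < a x} ∩ {x | 0 < b x} ∩ {x | 0 < c x}) \ (K₁ ∪ K₂ ∪ K₃) := by
    rw [hT]
    ext x
    constructor
    · rintro ⟨⟨ha, hb, hc⟩, hxK⟩
      have h1 := h1 x
      have hx' := hx' x
      refine ⟨⟨⟨ha.lt_of_ne' fun h0 => hxK ?_, hb.lt_of_ne' fun h0 => hxK ?_⟩,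
        hc.lt_of_ne' fun h0 => hxK ?_⟩, hxK⟩
      · rw [hx', h0, zero_smul, zero_add]
        exact .inl (.inl (h.v1 h.q1 h.s1 hb hc (by linarith)))
      · rw [hx', h0, zero_smul, add_zero]
        exact .inr (h.v3 h.p3 h.s3 ha hc (by linarith))
      · rw [hx', h0, zero_smul, add_zero]
        exact .inl (.inr (h.v2 h.p2 h.q2 ha hb (by linarith)))
    · rintro ⟨⟨⟨ha, hb⟩, hc⟩, hxK⟩
      exact ⟨⟨le_of_lt ha, le_of_lt hb, le_of_lt hc⟩, hxK⟩
  rw [e]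
  exact (((isOpen_lt continuous_const ca).inter (isOpen_lt continuous_const cb)).inter
    (isOpen_lt continuous_const cc)).sdiff ((h.c1.union h.c2).union h.c3)

/-- The rays from `p` that meet the hole form an interval `G`, and each of them meets it in an
interval. The projection of an open part of the hole to the parameter `θ` is open, so a separation
of the hole would separate `G`. -/
theorem isPreconnected_hole (h : TouchingTriple K₁ K₂ K₃ p q s) :
    IsPreconnected (convexHull ℝ {p, q, s} \ (K₁ ∪ K₂ ∪ K₃)) := by
  set H := convexHull ℝ {p, q, s} \ (K₁ ∪ K₂ ∪ K₃) with hH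
  let G : Set ℝ := {θ | θ ∈ Set.Icc (0 : ℝ) 1 ∧ ∃ r ∈ Set.Icc (0 : ℝ) 1, rayPoint p q s θ r ∈ H}
  have hG : IsPreconnected G := by
    apply Set.OrdConnected.isPreconnected
    refine ⟨fun α hα γ hγ β hβ => ?_⟩
    have hβ01 : β ∈ Set.Icc (0 : ℝ) 1 := ⟨hα.1.1.trans hβ.1, hβ.2.trans hγ.1.2⟩
    refine ⟨hβ01, ?_⟩
    by_contra! hno
    have hcov : ∀ r ∈ Set.Icc (0 : ℝ) 1, rayPoint p q s β r ∈ K₁ ∪ K₂ ∪ K₃ := by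
      intro r hr
      by_contra hn
      exact hno r hr ⟨rayPoint_mem_triangle p q s hβ01 hr, hn⟩
    rcases h.blocked_of_covered hβ01 hcov with ⟨r, hr, hm⟩ | ⟨r, hr, hm⟩
    · obtain ⟨r', -, hm'⟩ := h.blocked_down hα.1.1 hβ.1 hr hm
      obtain ⟨-, u, hu, hu'⟩ := id hα
      exact hu'.2 (h.covered_of_blocked₂ hα.1 hu hm')
    · obtain ⟨r', -, hm'⟩ := h.blocked_up hγ.1.2 hβ.2 hr hm
      obtain ⟨-, u, hu, hu'⟩ := id hγ
      exact hu'.2 (h.covered_of_blocked₃ hγ.1 hu hm')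
  have hfib : ∀ {θ r u t : ℝ}, θ ∈ Set.Icc (0 : ℝ) 1 → r ∈ Set.Icc (0 : ℝ) 1 →
      u ∈ Set.Icc (0 : ℝ) 1 → rayPoint p q s θ r ∈ H → rayPoint p q s θ u ∈ H →
      r ≤ t → t ≤ u → rayPoint p q s θ t ∈ H := by
    intro θ r u t hθ hr hu hrH huH hrt htu
    refine ⟨rayPoint_mem_triangle p q s hθ ⟨hr.1.trans hrt, htu.trans hu.2⟩, ?_⟩
    rintro ((hm | hm) | hm)
    · exact huH.2 (.inl (.inl (h.v1.mem_of_mem_line hm (h.rayPoint_one_mem hθ) htu hu.2)))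
    · exact hrH.2 (.inl (.inr (h.v2.mem_of_mem_line (a := 0) (by simpa using h.p2) hm hr.1 hrt)))
    · exact hrH.2 (.inr (h.v3.mem_of_mem_line (a := 0) (by simpa using h.p3) hm hr.1 hrt))
  have hproj : ∀ U : Set (Fin 2 → ℝ), IsOpen U →
      IsOpen {θ : ℝ | ∃ r ∈ Set.Icc (0 : ℝ) 1, rayPoint p q s θ r ∈ H ∩ U} := by
    intro U hU
    have : {θ : ℝ | ∃ r ∈ Set.Icc (0 : ℝ) 1, rayPoint p q s θ r ∈ H ∩ U} =
        ⋃ r ∈ Set.Icc (0 : ℝ) 1, (fun θ => rayPoint p q s θ r) ⁻¹' (H ∩ U) := by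
      ext θ
      simp only [Set.mem_ofPred_eq, Set.mem_iUnion, Set.mem_preimage, exists_prop]
    rw [this]
    refine isOpen_biUnion fun r _ => (h.isOpen_hole.inter hU).preimage ?_
    unfold rayPoint; fun_prop
  intro U V hU hV hcov hHU hHV
  have hne : ∀ W : Set (Fin 2 → ℝ), (H ∩ W).Nonempty →
      (G ∩ {θ : ℝ | ∃ r ∈ Set.Icc (0 : ℝ) 1, rayPoint p q s θ r ∈ H ∩ W}).Nonempty := by
    rintro W ⟨x, hxH, hxW⟩
    obtain ⟨θ, hθ, r, hr, rfl⟩ := h.exists_rayPoint_eq hxH.1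
    exact ⟨θ, ⟨hθ, r, hr, hxH⟩, r, hr, hxH, hxW⟩
  obtain ⟨θ, ⟨hθ, -⟩, ⟨r, hr, hrU⟩, u, hu, huV⟩ := hG _ _ (hproj U hU) (hproj V hV)
    (by
      rintro θ ⟨hθ, r, hr, hm⟩
      rcases hcov hm with hm' | hm'
      · exact .inl ⟨r, hr, hm, hm'⟩
      · exact .inr ⟨r, hr, hm, hm'⟩)
    (hne U hHU) (hne V hHV)
  -- The piece of the ray `θ` between its points in `U` and in `V` lies in the hole.
  have hcont : Continuous (rayPoint p q s θ) := by unfold rayPoint; fun_prop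
  have hsub : rayPoint p q s θ '' Set.uIcc r u ⊆ H := by
    rintro _ ⟨t, ht, rfl⟩
    rcases le_total r u with hru | hru
    · rw [Set.uIcc_of_le hru] at ht
      exact hfib hθ hr hu hrU.1 huV.1 ht.1 ht.2
    · rw [Set.uIcc_of_ge hru] at ht
      exact hfib hθ hu hr huV.1 hrU.1 ht.1 ht.2
  obtain ⟨x, hx, hxUV⟩ := (isPreconnected_uIcc.image _ hcont.continuousOn) U V hU hV
    (hsub.trans hcov) ⟨_, ⟨r, Set.left_mem_uIcc, rfl⟩, hrU.2⟩ ⟨_, ⟨u, Set.right_mem_uIcc, rfl⟩, huV.2⟩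
  exact ⟨x, hsub hx, hxUV⟩

end TouchingTriple

/-! ### The exterior -/

/-- If `x` lies beyond the edge `qs` as seen from `p`, the segment from `x` to `p` crosses that
edge. -/
theorem exists_mem_of_one_neg {K : Set (Fin 2 → ℝ)} (hK : Convex ℝ K) {x p q s : Fin 2 → ℝ}
    {a b c : ℝ} (h1 : a + b + c = 1) (hx : x = a • p + b • q + c • s) (ha : a < 0) (hb : 0 ≤ b)
    (hc : 0 ≤ c) (hq : q ∈ K) (hs : s ∈ K) : ∃ t : ℝ, 0 ≤ t ∧ x + t • (p - x) ∈ K := by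
  have hd : 0 < b + c := by linarith
  refine ⟨-a / (b + c), div_nonneg (by linarith) hd.le, ?_⟩
  have e : x + (-a / (b + c)) • (p - x) = (b / (b + c)) • q + (c / (b + c)) • s := by
    rw [hx]
    obtain rfl : a = 1 - (b + c) := by linarith
    ext i
    simp only [Pi.add_apply, Pi.smul_apply, Pi.sub_apply, smul_eq_mul]
    field_simp
    ring
  rw [e]
  exact hK hq hs (by positivity) (by positivity) (by field_simp)

/-- If `x` lies in the cone opposite to the triangle at its vertex `s`, the ray from `x` through
`s` crosses the edge `pq`. -/
theorem exists_mem_of_two_neg {K : Set (Fin 2 → ℝ)} (hK : Convex ℝ K) {x p q s : Fin 2 → ℝ}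
    {a b c : ℝ} (h1 : a + b + c = 1) (hx : x = a • p + b • q + c • s) (ha : a < 0) (hb : b < 0)
    (hp : p ∈ K) (hq : q ∈ K) : ∃ t : ℝ, 0 ≤ t ∧ x + t • (s - x) ∈ K := by
  have hd : a + b < 0 := by linarith
  have hd' : a + b ≠ 0 := hd.ne
  refine ⟨1 - 1 / (a + b), by
    have := div_neg_of_pos_of_neg one_pos hd
    linarith, ?_⟩
  have e : x + (1 - 1 / (a + b)) • (s - x) = (a / (a + b)) • p + (b / (a + b)) • q := by
    rw [hx]
    obtain rfl : c = 1 - (a + b) := by linarith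
    ext i
    simp only [Pi.add_apply, Pi.smul_apply, Pi.sub_apply, smul_eq_mul]
    field_simp
    ring
  rw [e]
  exact hK hp hq (div_nonneg_of_nonpos ha.le hd.le) (div_nonneg_of_nonpos hb.le hd.le)
    (by field_simp)

/-- From a point outside the triangle, the ray through a suitable vertex also meets the edge joining
the other two vertices. The vertex lies in two of the sets and that edge in the third. -/
theorem TouchingTriple.exists_common_direction {K₁ K₂ K₃ : Set (Fin 2 → ℝ)}
    {p q s x : Fin 2 → ℝ} (h : TouchingTriple K₁ K₂ K₃ p q s)
    (hx : x ∉ convexHull ℝ {p, q, s}) :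
    ∃ v : Fin 2 → ℝ, (∃ t : ℝ, 0 ≤ t ∧ x + t • v ∈ K₁) ∧ (∃ t : ℝ, 0 ≤ t ∧ x + t • v ∈ K₂) ∧
      ∃ t : ℝ, 0 ≤ t ∧ x + t • v ∈ K₃ := by
  obtain ⟨a, b, c, -, -, -, h1, hx', hT⟩ := h.exists_coords
  have h1 := h1 x
  have hxa := hx' x
  rw [hT] at hx
  have hxb : x = b x • q + c x • s + a x • p := hxa.trans (by abel)
  have hxc : x = c x • s + a x • p + b x • q := hxa.trans (by abel)
  have hvert : ∀ {K : Set (Fin 2 → ℝ)} {y : Fin 2 → ℝ}, y ∈ K →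
      ∃ t : ℝ, 0 ≤ t ∧ x + t • (y - x) ∈ K := fun hy => ⟨1, zero_le_one, by simpa using hy⟩
  by_cases ha : 0 ≤ a x <;> by_cases hb : 0 ≤ b x <;> by_cases hc : 0 ≤ c x
  · exact absurd ⟨ha, hb, hc⟩ hx
  · exact ⟨s - x, hvert h.s1, exists_mem_of_one_neg h.v2 (by linarith) hxc (not_le.1 hc) ha hb
      h.p2 h.q2, hvert h.s3⟩
  · exact ⟨q - x, hvert h.q1, hvert h.q2, exists_mem_of_one_neg h.v3 (by linarith) hxb
      (not_le.1 hb) hc ha h.s3 h.p3⟩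
  · exact ⟨p - x, exists_mem_of_two_neg h.v1 (by linarith) hxb (not_le.1 hb) (not_le.1 hc)
      h.q1 h.s1, hvert h.p2, hvert h.p3⟩
  · exact ⟨p - x, exists_mem_of_one_neg h.v1 h1 hxa (not_le.1 ha) hb hc h.q1 h.s1,
      hvert h.p2, hvert h.p3⟩
  · exact ⟨q - x, hvert h.q1, hvert h.q2, exists_mem_of_two_neg h.v3 (by linarith) hxc
      (not_le.1 hc) (not_le.1 ha) h.s3 h.p3⟩
  · exact ⟨s - x, hvert h.s1, exists_mem_of_two_neg h.v2 h1 hxa (not_le.1 ha) (not_le.1 hb)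
      h.p2 h.q2, hvert h.s3⟩
  · exact absurd h1 (by linarith)

/-- A point outside a convex set that sees it in direction `v` does not see it in direction
`-v`. -/
theorem Convex.notMem_opposite_ray {K : Set (Fin 2 → ℝ)} (hK : Convex ℝ K) {x v : Fin 2 → ℝ}
    (hx : x ∉ K) (hv : ∃ t : ℝ, 0 ≤ t ∧ x + t • v ∈ K) {u : ℝ} (hu : 0 ≤ u) :
    x + (-u) • v ∉ K := by
  obtain ⟨t, ht, hm⟩ := hv
  intro hm'
  exact hx (by simpa using hK.mem_of_mem_line (b := 0) hm' hm (by linarith) ht)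

theorem isPreconnected_compl_closedBall {R : ℝ} (hR : 0 ≤ R) :
    IsPreconnected (Metric.closedBall (0 : Fin 2 → ℝ) R)ᶜ := by
  have hrank : 1 < Module.rank ℝ (Fin 2 → ℝ) := by simp
  have e : (Metric.closedBall (0 : Fin 2 → ℝ) R)ᶜ =
      (fun z : ℝ × (Fin 2 → ℝ) => z.1 • z.2) '' (Set.Ioi R ×ˢ Metric.sphere 0 1) := by
    ext y
    simp only [Set.mem_compl_iff, Metric.mem_closedBall, dist_zero_right, not_le]
    constructor
    · intro hy
      have hy0 : ‖y‖ ≠ 0 := (hR.trans_lt hy).ne'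
      refine ⟨(‖y‖, ‖y‖⁻¹ • y), ⟨hy, ?_⟩, ?_⟩
      · simp [norm_smul, hy0]
      · simp [smul_smul, hy0]
    · rintro ⟨⟨r, z⟩, ⟨hr, hz⟩, rfl⟩
      have hr : R < r := hr
      have hz : ‖z‖ = 1 := by simpa using hz
      simp only [norm_smul, hz, Real.norm_eq_abs, mul_one]
      exact hr.trans_le (le_abs_self r)
  rw [e]
  exact (isPreconnected_Ioi.prod (isPreconnected_sphere hrank 0 1)).image _
    (by fun_prop)


/-! ### The two components -/

/-- If three planar convex bodies pairwise touch and have no common point, then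
the complement of their union has exactly two connected components, exactly one
of which is bounded. -/
theorem stmt15 (K₁ K₂ K₃ : Set (Fin 2 → ℝ))
    (hcomp : IsCompact K₁ ∧ IsCompact K₂ ∧ IsCompact K₃)
    (hconv : Convex ℝ K₁ ∧ Convex ℝ K₂ ∧ Convex ℝ K₃)
    (hint : (interior K₁).Nonempty ∧ (interior K₂).Nonempty ∧
      (interior K₃).Nonempty)
    (h12 : (K₁ ∩ K₂).Nonempty ∧ interior K₁ ∩ interior K₂ = ∅)
    (h13 : (K₁ ∩ K₃).Nonempty ∧ interior K₁ ∩ interior K₃ = ∅)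
    (h23 : (K₂ ∩ K₃).Nonempty ∧ interior K₂ ∩ interior K₃ = ∅)
    (htriple : K₁ ∩ K₂ ∩ K₃ = ∅) :
    ∃ A B : Set (Fin 2 → ℝ),
      (∃ a ∈ (K₁ ∪ K₂ ∪ K₃)ᶜ, A = connectedComponentIn (K₁ ∪ K₂ ∪ K₃)ᶜ a) ∧
      (∃ b ∈ (K₁ ∪ K₂ ∪ K₃)ᶜ, B = connectedComponentIn (K₁ ∪ K₂ ∪ K₃)ᶜ b) ∧
      A ≠ B ∧ A ∪ B = (K₁ ∪ K₂ ∪ K₃)ᶜ ∧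
      Bornology.IsBounded A ∧ ¬ Bornology.IsBounded B := by
  obtain ⟨p, hp2, hp3⟩ := h23.1
  obtain ⟨q, hq1, hq2⟩ := h12.1
  obtain ⟨s, hs1, hs3⟩ := h13.1
  have h : TouchingTriple K₁ K₂ K₃ p q s :=
    ⟨hcomp.1.isClosed, hcomp.2.1.isClosed, hcomp.2.2.isClosed, hconv.1, hconv.2.1, hconv.2.2,
      hp2, hp3, hq1, hq2, hs1, hs3, fun x h1 h2 h3 => by
        have : x ∈ K₁ ∩ K₂ ∩ K₃ := ⟨⟨h1, h2⟩, h3⟩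
        rw [htriple] at this
        exact this⟩
  have hTc : IsCompact (convexHull ℝ ({p, q, s} : Set (Fin 2 → ℝ))) :=
    (Set.toFinite _).isCompact_convexHull ℝ
  have hKc : IsCompact (K₁ ∪ K₂ ∪ K₃) := (hcomp.1.union hcomp.2.1).union hcomp.2.2
  set T := convexHull ℝ ({p, q, s} : Set (Fin 2 → ℝ)) with hT
  set K := K₁ ∪ K₂ ∪ K₃ with hK
  obtain ⟨R, hR0, hR⟩ : ∃ R : ℝ, 0 ≤ R ∧ K ∪ T ⊆ Metric.closedBall 0 R := by
    obtain ⟨R, hR⟩ := (hKc.union hTc).isBounded.subset_closedBall 0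
    exact ⟨max R 0, le_max_right _ _, hR.trans (Metric.closedBall_subset_closedBall (le_max_left _ _))⟩
  have hfarK : (Metric.closedBall (0 : Fin 2 → ℝ) R)ᶜ ⊆ Kᶜ :=
    Set.compl_subset_compl.2 (Set.subset_union_left.trans hR)
  have hHo : IsOpen (T \ K) := h.isOpen_hole
  have hEo : IsOpen (Kᶜ \ T) := hKc.isClosed.isOpen_compl.sdiff hTc.isClosed
  have hdisj : Disjoint (T \ K) (Kᶜ \ T) :=
    Set.disjoint_left.2 fun x hx hx' => hx'.2 hx.1
  have hcover : Kᶜ ⊆ (T \ K) ∪ (Kᶜ \ T) := fun x hx => by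
    by_cases hxT : x ∈ T
    · exact .inl ⟨hxT, hx⟩
    · exact .inr ⟨hx, hxT⟩
  obtain ⟨θ, hθ, r, hr, haK⟩ := h.exists_gap
  have haT : rayPoint p q s θ r ∈ T := rayPoint_mem_triangle p q s hθ hr
  set a := rayPoint p q s θ r
  obtain ⟨b, hb⟩ : ∃ b, b ∈ (Metric.closedBall (0 : Fin 2 → ℝ) R)ᶜ := by
    by_contra! hno
    refine NormedSpace.unbounded_univ ℝ (Fin 2 → ℝ)
      (Metric.isBounded_closedBall (x := (0 : Fin 2 → ℝ)) (r := R) |>.subset fun x _ => ?_)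
    exact not_not.1 (hno x)
  have hbK : b ∈ Kᶜ := hfarK hb
  have hbT : b ∉ T := fun hbT => hb (hR (.inr hbT))
  have hA : connectedComponentIn Kᶜ a = T \ K := by
    apply Set.Subset.antisymm
    · rcases isPreconnected_connectedComponentIn.subset_or_subset hHo hEo hdisj
        ((connectedComponentIn_subset Kᶜ a).trans hcover) with h' | h'
      · exact h'
      · exact absurd haT (h' (mem_connectedComponentIn haK)).2
    · exact h.isPreconnected_hole.subset_connectedComponentIn ⟨haT, haK⟩ fun x hx => hx.2
  have hB : connectedComponentIn Kᶜ b = Kᶜ \ T := by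
    apply Set.Subset.antisymm
    · rcases isPreconnected_connectedComponentIn.subset_or_subset hHo hEo hdisj
        ((connectedComponentIn_subset Kᶜ b).trans hcover) with h' | h'
      · exact absurd (h' (mem_connectedComponentIn hbK)).1 hbT
      · exact h'
    · rintro x ⟨hxK, hxT⟩
      obtain ⟨v, hv1, hv2, hv3⟩ := h.exists_common_direction hxT
      have hx1 : x ∉ K₁ := fun hx => hxK (.inl (.inl hx))
      have hx2 : x ∉ K₂ := fun hx => hxK (.inl (.inr hx))
      have hx3 : x ∉ K₃ := fun hx => hxK (.inr hx)
      have hv0 : v ≠ 0 := by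
        rintro rfl
        obtain ⟨t, -, ht⟩ := hv1
        exact hx1 (by simpa using ht)
      have hpre : IsPreconnected ((fun u : ℝ => x + (-u) • v) '' Set.Ici 0) :=
        isPreconnected_Ici.image _ (by fun_prop)
      have hsub : (fun u : ℝ => x + (-u) • v) '' Set.Ici 0 ⊆ Kᶜ := by
        rintro _ ⟨u, hu, rfl⟩ ((hm | hm) | hm)
        · exact hconv.1.notMem_opposite_ray hx1 hv1 hu hm
        · exact hconv.2.1.notMem_opposite_ray hx2 hv2 hu hm
        · exact hconv.2.2.notMem_opposite_ray hx3 hv3 hu hm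
      have hfar : ((fun u : ℝ => x + (-u) • v) '' Set.Ici 0 ∩
          (Metric.closedBall (0 : Fin 2 → ℝ) R)ᶜ).Nonempty := by
        have hvn : 0 < ‖v‖ := norm_pos_iff.2 hv0
        have hu : 0 ≤ (R + ‖x‖ + 1) / ‖v‖ := by positivity
        refine ⟨_, ⟨(R + ‖x‖ + 1) / ‖v‖, hu, rfl⟩, ?_⟩
        simp only [Set.mem_compl_iff, Metric.mem_closedBall, dist_zero_right, not_le]
        have h1 : ‖(-((R + ‖x‖ + 1) / ‖v‖)) • v‖ = R + ‖x‖ + 1 := by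
          rw [norm_smul, norm_neg, Real.norm_of_nonneg hu]
          field_simp
        have h2 := norm_sub_le (x + (-((R + ‖x‖ + 1) / ‖v‖)) • v) x
        rw [add_sub_cancel_left, h1] at h2
        linarith
      refine (hpre.union' hfar (isPreconnected_compl_closedBall hR0)).subset_connectedComponentIn
        (.inr hb) (Set.union_subset hsub hfarK) (.inl ⟨0, by simp, by simp⟩)
  have hbdd : Bornology.IsBounded (T \ K) := hTc.isBounded.subset Set.sdiff_subset
  have hunion : (T \ K) ∪ (Kᶜ \ T) = Kᶜ :=
    Set.Subset.antisymm (Set.union_subset (fun x hx => hx.2) Set.sdiff_subset) hcover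
  refine ⟨T \ K, Kᶜ \ T, ⟨a, haK, hA.symm⟩, ⟨b, hbK, hB.symm⟩, ?_, hunion, hbdd, fun hE => ?_⟩
  · intro heq
    have : b ∈ T \ K := heq ▸ ⟨hbK, hbT⟩
    exact hbT this.1
  · refine NormedSpace.unbounded_univ ℝ (Fin 2 → ℝ) ?_
    rw [← Set.union_compl_self K, ← hunion]
    exact hKc.isBounded.union (hbdd.union hE)
end

section
/- Let K be a centrally symmetric convex body in ℝ^d (a compact convex set with nonempty interior satisfying K = −K), and let K + c_1, …, K + c_n be pairwise touching translates of K (for all i ≠ j, (K + c_i) ∩ (K + c_j) ≠ ∅ and interior(K + c_i) ∩ interior(K + c_j) = ∅, with the c_i pairwise distinct). Then n ≤ 2^d. -/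
open Pointwise

/-!
The gauge `N` of `K` is a norm, and two translates `K + a`, `K + b` touch exactly when
`N (a - b) = 2`, so the centres form an equilateral set for `N`. Let `P` be their convex hull,
inside the linear span of the differences `c i - c j`, where it has nonempty interior `U`.
By convexity `N (p - q) ≤ 2` for all `p q ∈ P`. The half-size copies `(c i + U) / 2` are contained
in `U`; they are pairwise disjoint, since a common point gives `u v ∈ U` with `v - u = c i - c j`,
and pushing `v` slightly further in this direction stays in `U` and makes the distance to `u`
exceed `2`. Comparing volumes, `n * 2⁻ᵐ ≤ 1`, where `m ≤ d` is the dimension of the span.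
-/

/-- Petty's volume bound for an equilateral family that affinely spans the space. The distance is
given by an arbitrary sublinear function `N`, so that a gauge can be restricted to a subspace
without any further structure. -/
lemma card_le_of_equilateral_of_span {E : Type*} [NormedAddCommGroup E] [NormedSpace ℝ E]
    [FiniteDimensional ℝ E] {n : ℕ} (c : Fin n → E)
    (hspan : affineSpan ℝ (Set.range c) = ⊤) (N : E → ℝ)
    (hadd : ∀ x y, N (x + y) ≤ N x + N y) (hsmul : ∀ t : ℝ, 0 ≤ t → ∀ x, N (t • x) = t * N x)
    {r : ℝ} (hr : 0 < r) (hc : ∀ i j, i ≠ j → N (c i - c j) = r) :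
    n ≤ 2 ^ Module.finrank ℝ E := by
  borelize E
  set P := convexHull ℝ (Set.range c) with hP
  have hPconv : Convex ℝ P := convex_convexHull ℝ _
  have hUne : (interior P).Nonempty := interior_convexHull_nonempty_iff_affineSpan_eq_top.2 hspan
  have hPbdd : Bornology.IsBounded P :=
    isBounded_convexHull.2 (Set.finite_range c).isBounded
  have hball : Convex ℝ {x | N x ≤ r} := by
    intro x hx y hy a b ha hb hab
    have h1 := hadd (a • x) (b • y)
    rw [hsmul a ha, hsmul b hb] at h1
    simp only [Set.mem_ofPred_eq] at hx hy ⊢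
    have : a * r + b * r = r := by rw [← add_mul, hab, one_mul]
    nlinarith [mul_le_mul_of_nonneg_left hx ha, mul_le_mul_of_nonneg_left hy hb]
  have hdiam : ∀ p ∈ P, ∀ q ∈ P, N (p - q) ≤ r := by
    intro p hp q hq
    have hsub : convexHull ℝ (Set.range c - Set.range c) ⊆ {x | N x ≤ r} := by
      refine convexHull_min ?_ hball
      rintro _ ⟨_, ⟨i, rfl⟩, _, ⟨j, rfl⟩, rfl⟩
      by_cases hij : i = j
      · subst hij
        have := hsmul 0 le_rfl 0
        simp only [smul_zero, zero_mul] at this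
        simp [this, hr.le]
      · exact (hc i j hij).le
    rw [convexHull_sub] at hsub
    exact hsub (Set.sub_mem_sub hp hq)
  let A : Fin n → Set E := fun i => AffineMap.homothety (c i) (1 / 2 : ℝ) '' interior P
  have hAsub : ∀ i, A i ⊆ interior P := by
    rintro i _ ⟨u, hu, rfl⟩
    have hci : c i ∈ P := subset_convexHull ℝ _ ⟨i, rfl⟩
    have := hPconv.combo_interior_self_mem_interior hu hci (a := 1 / 2) (b := 1 / 2)
      (by norm_num) (by norm_num) (by norm_num)
    convert this using 1
    simp only [AffineMap.homothety_apply, vsub_eq_sub, vadd_eq_add]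
    module
  have hAmeas : ∀ i, MeasurableSet (A i) := by
    intro i
    exact ((AffineMap.homothety_isOpenMap (c i) (1 / 2 : ℝ) (by norm_num)) _
      isOpen_interior).measurableSet
  have hAdisj : Pairwise (Function.onFun Disjoint A) := by
    intro i j hij
    rw [Function.onFun, Set.disjoint_left]
    rintro _ ⟨u, hu, rfl⟩ ⟨v, hv, huv⟩
    simp only [AffineMap.homothety_apply, vsub_eq_sub, vadd_eq_add] at huv
    have hvu : v - u = c i - c j := by
      have h2 := congrArg (fun z => (2 : ℝ) • z) huv
      beta_reduce at h2
      have e1 : (2 : ℝ) • ((1 / 2 : ℝ) • (v - c j) + c j) = v + c j := by module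
      have e2 : (2 : ℝ) • ((1 / 2 : ℝ) • (u - c i) + c i) = u + c i := by module
      rw [e1, e2] at h2
      rw [sub_eq_sub_iff_add_eq_add, h2, add_comm]
    have hcont : Filter.Tendsto (fun t : ℝ => v + t • (v - u)) (nhds 0) (nhds v) := by
      have : Continuous (fun t : ℝ => v + t • (v - u)) := by fun_prop
      simpa using this.tendsto 0
    have hev := hcont.eventually (isOpen_interior.mem_nhds hv)
    obtain ⟨t, ht, htpos⟩ :=
      ((hev.filter_mono nhdsWithin_le_nhds).and
        (self_mem_nhdsWithin : Set.Ioi (0 : ℝ) ∈ nhdsWithin 0 (Set.Ioi 0))).exists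
    have htpos : 0 < t := htpos
    have hle := hdiam _ (interior_subset ht) _ (interior_subset hu)
    have heq : v + t • (v - u) - u = (1 + t) • (c i - c j) := by
      rw [← hvu]; module
    rw [heq, hsmul _ (by linarith), hc i j hij] at hle
    nlinarith
  let μ : MeasureTheory.Measure E := MeasureTheory.Measure.addHaar
  have hUpos : μ (interior P) ≠ 0 := (isOpen_interior.measure_pos μ hUne).ne'
  have hUfin : μ (interior P) ≠ ⊤ := (hPbdd.subset interior_subset).measure_lt_top.ne
  have hAvol : ∀ i, μ.real (A i) = (1 / 2) ^ Module.finrank ℝ E * μ.real (interior P) := by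
    intro i
    simp only [A, MeasureTheory.Measure.real, MeasureTheory.Measure.addHaar_image_homothety,
      ENNReal.toReal_mul]
    rw [ENNReal.toReal_ofReal (abs_nonneg _), abs_of_nonneg (by positivity)]
  have hsum : ∑ i, μ.real (A i) ≤ μ.real (interior P) := by
    rw [← MeasureTheory.measureReal_iUnion_fintype hAdisj hAmeas
      (fun i => MeasureTheory.measure_ne_top_of_subset (hAsub i) hUfin)]
    exact MeasureTheory.measureReal_mono (Set.iUnion_subset hAsub) hUfin
  have hpos : 0 < μ.real (interior P) := ENNReal.toReal_pos hUpos hUfin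
  simp only [hAvol, Finset.sum_const, Finset.card_univ, Fintype.card_fin, nsmul_eq_mul] at hsum
  rw [← mul_assoc] at hsum
  have h1 : (n : ℝ) * (1 / 2) ^ Module.finrank ℝ E ≤ 1 := by
    by_contra! hlt
    nlinarith
  rw [one_div, inv_pow, ← div_eq_mul_inv, div_le_one (by positivity)] at h1
  exact_mod_cast h1

/-- A family of pairwise touching translates of a centrally symmetric convex
body in `ℝ^d` has at most `2^d` members. -/
theorem stmt16 {d n : ℕ} (K : Set (Fin d → ℝ))
    (hKcomp : IsCompact K) (hKconv : Convex ℝ K)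
    (hKint : (interior K).Nonempty) (hKsymm : K = -K)
    (c : Fin n → (Fin d → ℝ)) (hinj : Function.Injective c)
    (h : ∀ i j : Fin n, i ≠ j →
      ((c i +ᵥ K) ∩ (c j +ᵥ K)).Nonempty ∧
      interior (c i +ᵥ K) ∩ interior (c j +ᵥ K) = ∅) :
    n ≤ 2 ^ d := by
  have hneg : ∀ x ∈ K, -x ∈ K := fun x hx => by rw [hKsymm]; simpa using hx
  have hnegint : ∀ x ∈ interior K, -x ∈ interior K := fun x hx => by
    have hx' : -x ∈ (Homeomorph.neg (Fin d → ℝ)) ⁻¹' interior K := by simpa using hx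
    rw [Homeomorph.preimage_interior] at hx'
    rwa [show (Homeomorph.neg (Fin d → ℝ)) ⁻¹' K = K from hKsymm.symm] at hx'
  have h0 : K ∈ nhds (0 : Fin d → ℝ) := by
    obtain ⟨x, hx⟩ := hKint
    rw [mem_interior_iff_mem_nhds.symm]
    have := hKconv.interior hx (hnegint x hx) (a := 1 / 2) (b := 1 / 2)
      (by norm_num) (by norm_num) (by norm_num)
    simpa using this
  have habs : Absorbent ℝ K := absorbent_nhds_zero h0
  have hgauge : ∀ i j, i ≠ j → gauge K (c i - c j) = 2 := by
    intro i j hij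
    obtain ⟨⟨x, hx1, hx2⟩, hdisj⟩ := h i j hij
    apply le_antisymm
    · obtain ⟨k, hk, rfl⟩ := hx1
      obtain ⟨k', hk', hkk⟩ := hx2
      simp only [vadd_eq_add] at hkk
      have heq : c i - c j = k' + -k := by
        rw [← sub_eq_add_neg, sub_eq_sub_iff_add_eq_add, ← hkk, add_comm]
      rw [heq]
      have := gauge_add_le hKconv habs k' (-k)
      have := gauge_le_one_of_mem hk'
      have := gauge_le_one_of_mem (hneg k hk)
      linarith
    · by_contra! hlt
      -- The midpoint of the two centres would be interior to both translates.
      set y := (1 / 2 : ℝ) • (c i - c j) with hy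
      have hyint : y ∈ interior K := by
        rw [← gauge_lt_one_iff_mem_interior hKconv h0, hy,
          gauge_smul_of_nonneg (by norm_num), smul_eq_mul]
        linarith
      have hmem : c j + y ∈ interior (c i +ᵥ K) ∩ interior (c j +ᵥ K) := by
        rw [interior_vadd, interior_vadd]
        refine ⟨⟨-y, hnegint y hyint, ?_⟩, ⟨y, hyint, rfl⟩⟩
        simp only [vadd_eq_add, hy]
        module
      rw [hdisj] at hmem
      exact hmem
  rcases n.eq_zero_or_pos with rfl | hn
  · exact Nat.zero_le _
  let i₀ : Fin n := ⟨0, hn⟩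
  let W : Submodule ℝ (Fin d → ℝ) := Submodule.span ℝ (Set.range fun i => c i - c i₀)
  let c' : Fin n → W := fun i => ⟨c i - c i₀, Submodule.subset_span ⟨i, rfl⟩⟩
  have hspanW : Submodule.span ℝ (Set.range c') = ⊤ := by
    apply Submodule.map_injective_of_injective W.injective_subtype
    rw [Submodule.map_span, Submodule.map_subtype_top, ← Set.range_comp]
    rfl
  have hzero : (0 : W) ∈ Set.range c' := ⟨i₀, by simp [c']⟩
  have haff : affineSpan ℝ (Set.range c') = ⊤ := by
    rw [← AffineSubspace.coe_eq_univ_iff, ← Set.insert_eq_of_mem hzero, affineSpan_insert_zero,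
      hspanW, Submodule.top_coe]
  have hcard := card_le_of_equilateral_of_span c' haff (fun w => gauge K (w : Fin d → ℝ))
    (fun x y => gauge_add_le hKconv habs x y)
    (fun t ht x => by simp [gauge_smul_of_nonneg ht])
    two_pos
    (fun i j hij => by simpa [c'] using hgauge i j hij)
  refine hcard.trans (Nat.pow_le_pow_right two_pos ?_)
  simpa using W.finrank_le
end
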